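/- Let k ≥ 4 be an integer, let ε > 0, and let H be a 2-contractible k-tree with s vertices and t edges. Let F be an s-super-homogeneous k-partite k-graph on [n] (with its fixed k-partition) such that |F| ≥ ε·n^{k−1} and MI(F) is of type 1. Then F contains at least (ε/(2ks))^t·n^{s−t} copies of H (distinct subgraphs of F isomorphic to H). -/

import Mathlib

open Finset Filter

attribute [local instance] Classical.propDecidable

/-- The vertex set `[n] = {1,…,n}`. -/
def vtx (n : ℕ) : Finset ℕ := Finset.Icc 1 n

/-- `F` is a `k`-graph on `[n]`: a family of `k`-element subsets of `[n]`. -/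
def IsKGraphOn (k n : ℕ) (F : Finset (Finset ℕ)) : Prop :=
  ∀ E ∈ F, E ⊆ vtx n ∧ E.card = k

/-- The vertex set of a hypergraph (union of its edges). -/
def vertexSet {α : Type} [DecidableEq α] (H : Finset (Finset α)) : Finset α := H.sup id

/-- The degree of a vertex: the number of edges containing it. -/
def vdeg {α : Type} [DecidableEq α] (H : Finset (Finset α)) (v : α) : ℕ :=
  (H.filter fun E => v ∈ E).card

/-- Hypertrees, defined recursively: a single edge is a hypertree, and a hypertree grows
by adding a new leaf edge `E` whose intersection with the current vertex set equals its
intersection with some existing (parent) edge `F`. -/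
inductive IsHypertree {α : Type} [DecidableEq α] : Finset (Finset α) → Prop
  | single (E : Finset α) : IsHypertree {E}
  | grow {H : Finset (Finset α)} (E F : Finset α) (hH : IsHypertree H) (hE : E ∉ H)
      (hF : F ∈ H) (hint : E ∩ vertexSet H = E ∩ F) : IsHypertree (insert E H)

/-- A `k`-tree: a `k`-uniform hypertree. -/
def IsKTree {α : Type} [DecidableEq α] (k : ℕ) (H : Finset (Finset α)) : Prop :=
  IsHypertree H ∧ ∀ E ∈ H, E.card = k

/-- A hypergraph is 2-contractible if every edge contains at least two vertices of degree 1. -/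
def TwoContractible {α : Type} [DecidableEq α] (H : Finset (Finset α)) : Prop :=
  ∀ E ∈ H, 2 ≤ (E.filter fun v => vdeg H v = 1).card

/-- `S` is a cross-cut of `H`: every edge meets `S` in exactly one vertex. -/
def IsCrosscut {α : Type} [DecidableEq α] (H : Finset (Finset α)) (S : Finset α) : Prop :=
  ∀ E ∈ H, (E ∩ S).card = 1

/-- `σ` is the cross-cut number of `H`: the minimum size of a cross-cut. -/
def IsCrosscutNumber {α : Type} [DecidableEq α] (H : Finset (Finset α)) (σ : ℕ) : Prop :=
  IsLeast {m | ∃ S : Finset α, IsCrosscut H S ∧ S.card = m} σ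

/-- A hypergraph is `ℓ`-overlapping if any two distinct edges meet in at most `ℓ` vertices. -/
def Overlapping {α : Type} [DecidableEq α] (ℓ : ℕ) (H : Finset (Finset α)) : Prop :=
  ∀ E ∈ H, ∀ F ∈ H, E ≠ F → (E ∩ F).card ≤ ℓ

/-- `K` is (the edge set of) a copy of `H`, i.e. the image of `H` under a map that is
injective on the vertex set of `H`. -/
def IsCopyOf {α : Type} [DecidableEq α] (H : Finset (Finset α)) (K : Finset (Finset ℕ)) : Prop :=
  ∃ φ : α → ℕ, Set.InjOn φ ↑(vertexSet H) ∧ K = H.image fun E => E.image φ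

/-- `F` contains no subgraph isomorphic to `H`. -/
def HFree {α : Type} [DecidableEq α] (H : Finset (Finset α)) (F : Finset (Finset ℕ)) : Prop :=
  ∀ K ⊆ F, ¬ IsCopyOf H K

/-- The collection of copies of `H` in `F` (as distinct subgraphs of `F`). -/
noncomputable def copies {α : Type} [DecidableEq α] (H : Finset (Finset α))
    (F : Finset (Finset ℕ)) : Finset (Finset (Finset ℕ)) :=
  F.powerset.filter (IsCopyOf H)

/-- The number of `H`-free `k`-graphs on the vertex set `[n]`. -/
noncomputable def forb {α : Type} [DecidableEq α] (n k : ℕ) (H : Finset (Finset α)) : ℕ :=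
  (((vtx n).powersetCard k).powerset.filter (HFree H)).card

/-- `H` is a `k`-uniform linear cycle of length `ℓ`. -/
def IsLinearCycle {α : Type} [DecidableEq α] (k ℓ : ℕ) (H : Finset (Finset α)) : Prop :=
  ∃ E : ℕ → Finset α,
    (∀ i < ℓ, (E i).card = k) ∧
    (∀ i < ℓ, ∀ j < ℓ, i ≠ j → E i ≠ E j) ∧
    (∀ i < ℓ, (E i ∩ E ((i + 1) % ℓ)).card = 1) ∧
    (∀ i < ℓ, ∀ j < ℓ, i ≠ j → E i ∩ E ((i + 1) % ℓ) ≠ E j ∩ E ((j + 1) % ℓ)) ∧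
    (∀ i < ℓ, ∀ j < ℓ, i ≠ j → (i + 1) % ℓ ≠ j → (j + 1) % ℓ ≠ i → Disjoint (E i) (E j)) ∧
    H = (Finset.range ℓ).image E

/-- `(X 0, …, X (k-1))` is a `k`-partition of `F`. -/
def IsKPartition (k : ℕ) (F : Finset (Finset ℕ)) (X : Fin k → Finset ℕ) : Prop :=
  (∀ i j, i ≠ j → Disjoint (X i) (X j)) ∧ ∀ E ∈ F, ∀ i, (E ∩ X i).card = 1

/-- The `J`-projection of an edge. -/
def projJ {k : ℕ} (X : Fin k → Finset ℕ) (J : Finset (Fin k)) (E : Finset ℕ) : Finset ℕ :=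
  E ∩ J.sup X

/-- The pattern of a vertex set. -/
def pattern {k : ℕ} (X : Fin k → Finset ℕ) (D : Finset ℕ) : Finset (Fin k) :=
  Finset.univ.filter fun i => (D ∩ X i).Nonempty

/-- `MI(F)`: the patterns of intersections of pairs of distinct edges. -/
noncomputable def MI {k : ℕ} (F : Finset (Finset ℕ)) (X : Fin k → Finset ℕ) :
    Finset (Finset (Fin k)) :=
  ((F ×ˢ F).filter fun p => p.1 ≠ p.2).image fun p => pattern X (p.1 ∩ p.2)

/-- The link of a vertex set `D` in `F`. -/
def link {α : Type} [DecidableEq α] (F : Finset (Finset α)) (D : Finset α) :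
    Finset (Finset α) :=
  (F.filter fun E => D ⊆ E).image fun E => E \ D

/-- The degree of a vertex set `D` in `F`: the size of its link. -/
def setDeg {α : Type} [DecidableEq α] (F : Finset (Finset α)) (D : Finset α) : ℕ :=
  (link F D).card

/-- A nonempty hypergraph is `s`-diverse if every vertex has degree less than `|H|/s`. -/
def SDiverse {α : Type} [DecidableEq α] (s : ℕ) (H : Finset (Finset α)) : Prop :=
  H.Nonempty ∧ ∀ v : α, s * vdeg H v < H.card

/-- `D` is `s`-strong in `F` if its link is `s`-diverse. -/
def SStrong {α : Type} [DecidableEq α] (s : ℕ) (F : Finset (Finset α)) (D : Finset α) : Prop :=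
  SDiverse s (link F D)

/-- `F`, with `k`-partition `X`, is `s`-super-homogeneous: for every `J ∈ MI(F)` and every
edge `E ∈ F`, the projection `E_J` is `s`-strong and `d_F(E_J) ≥ max{s, |F|/(2k·n^|J|)}`. -/
def SuperHomogeneous (n k s : ℕ) (F : Finset (Finset ℕ)) (X : Fin k → Finset ℕ) : Prop :=
  ∀ J ∈ MI F X, ∀ E ∈ F,
    SStrong s F (projJ X J E) ∧
    s ≤ setDeg F (projJ X J E) ∧
    (F.card : ℝ) / (2 * k * (n : ℝ) ^ J.card) ≤ (setDeg F (projJ X J E) : ℝ)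

/-- The rank of a family of subsets of `[k]`: the minimum size of a set `D ⊆ [k]` contained
in no member of the family. -/
noncomputable def rankFam (k : ℕ) (𝒥 : Finset (Finset (Fin k))) : ℕ :=
  sInf {d | ∃ D : Finset (Fin k), D.card = d ∧ ∀ J ∈ 𝒥, ¬ D ⊆ J}

/-- A family of subsets of `[k]` is of type 1 if it contains the full power set of some
`(k-2)`-set `B`. -/
def TypeOne (k : ℕ) (𝒥 : Finset (Finset (Fin k))) : Prop :=
  ∃ B : Finset (Fin k), B.card = k - 2 ∧ ∀ S ⊆ B, S ∈ 𝒥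

/-- The constant `c(k,s) = k!/(k^k·(2s(1+2^k))^(2^k))`. -/
noncomputable def cks (k s : ℕ) : ℝ :=
  (Nat.factorial k : ℝ) / ((k : ℝ) ^ k * (2 * (s : ℝ) * (1 + 2 ^ k)) ^ (2 ^ k))

/-- Degree of a set of vertices in a (uniform) hypergraph `K`: number of edges containing it. -/
def uDeg {α : Type} [DecidableEq α] (K : Finset (Finset α)) (S : Finset α) : ℕ :=
  (K.filter fun e => S ⊆ e).card

/-- A `t`-uniform hypergraph is `d`-graded if `d_K(S) ≤ d^(t-|S|)` for all `S` with
`1 ≤ |S| ≤ t`. -/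
def Graded {α : Type} [DecidableEq α] (t : ℕ) (d : ℝ) (K : Finset (Finset α)) : Prop :=
  ∀ S : Finset α, 1 ≤ S.card → S.card ≤ t → (uDeg K S : ℝ) ≤ d ^ (t - S.card)

/-- `S` is saturated by `K`: `d_K(S) = ⌊d^(t-|S|)⌋`. -/
def Saturated {α : Type} [DecidableEq α] (t : ℕ) (d : ℝ) (K : Finset (Finset α))
    (S : Finset α) : Prop :=
  uDeg K S = ⌊d ^ (t - S.card)⌋₊

/-- `S` is admissible: no nonempty subset of `S` is saturated. -/
def Admissible {α : Type} [DecidableEq α] (t : ℕ) (d : ℝ) (K : Finset (Finset α))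
    (S : Finset α) : Prop :=
  ∀ S' ⊆ S, S'.Nonempty → ¬ Saturated t d K S'

/-- `Z_K(S)`: the vertices `v` such that `S ∪ {v}` is inadmissible and `{v}` is not
saturated. -/
noncomputable def Zset {α : Type} [DecidableEq α] (t : ℕ) (d : ℝ) (K : Finset (Finset α))
    (S : Finset α) : Finset α :=
  (vertexSet K).filter fun v => ¬ Admissible t d K (insert v S) ∧ ¬ Saturated t d K {v}

/-- `ex(G,H)`: the maximum number of edges of an `H`-free subgraph of `G`. -/
noncomputable def exIn {α : Type} [DecidableEq α] (H : Finset (Finset α))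
    (G : Finset (Finset ℕ)) : ℕ :=
  (G.powerset.filter (HFree H)).sup Finset.card

/-- The probability, in the random `k`-graph `G^(k)(n,p)` (each `k`-subset of `[n]` is an
edge independently with probability `p`), of the event `A`. -/
noncomputable def probEvent (k n : ℕ) (p : ℝ) (A : Finset (Finset ℕ) → Prop) : ℝ :=
  ∑ G ∈ ((vtx n).powersetCard k).powerset.filter A,
    p ^ G.card * (1 - p) ^ (((vtx n).powersetCard k).card - G.card)

theorem aux_extend {α : Type} [DecidableEq α] {k : ℕ} (c : α → Fin k) (A : Finset (Fin k))
    (S T : Finset α) (hST : S ⊆ T) (hT : T.card ≤ A.card) (hinj : Set.InjOn c ↑S)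
    (hA : ∀ v ∈ S, c v ∈ A) :
    ∃ c' : α → Fin k, (∀ v, v ∉ T \ S → c' v = c v) ∧ Set.InjOn c' ↑T ∧ ∀ v ∈ T, c' v ∈ A := by
  induction hm : (T \ S).card generalizing S c with
  | zero =>
    have h0 : T ⊆ S := by
      rw [Finset.card_eq_zero, Finset.sdiff_eq_empty_iff_subset] at hm
      exact hm
    have : S = T := Finset.Subset.antisymm hST h0
    subst this
    exact ⟨c, fun _ _ => rfl, hinj, hA⟩
  | succ m ih =>
    have hne : (T \ S).Nonempty := by
      rw [← Finset.card_pos]; omega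
    obtain ⟨x, hx⟩ := hne
    have hxT := (Finset.mem_sdiff.1 hx).1
    have hxS := (Finset.mem_sdiff.1 hx).2
    have hlt : (S.image c).card < A.card := by
      have h1 : (S.image c).card ≤ S.card := Finset.card_image_le
      have h2 : S.card < T.card :=
        Finset.card_lt_card ⟨hST, fun h => hxS (h hxT)⟩
      omega
    obtain ⟨a, haA, haS⟩ := Finset.exists_mem_notMem_of_card_lt_card hlt
    have hane : ∀ v ∈ S, c v ≠ a := fun v hv h => haS (Finset.mem_image.2 ⟨v, hv, h⟩)
    have hupd : ∀ v ∈ S, Function.update c x a v = c v := by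
      intro v hv
      have : v ≠ x := fun h => hxS (h ▸ hv)
      simp [Function.update, this]
    obtain ⟨c', h1, h2, h3⟩ := ih (Function.update c x a) (insert x S)
      (by intro v hv; rcases Finset.mem_insert.1 hv with h | h
          · exact h ▸ hxT
          · exact hST h)
      (by
        intro u hu v hv huv
        have hu' := Finset.mem_insert.1 (Finset.mem_coe.1 hu)
        have hv' := Finset.mem_insert.1 (Finset.mem_coe.1 hv)
        rcases hu' with hu' | hu' <;> rcases hv' with hv' | hv'
        · rw [hu', hv']
        · rw [hu', hupd v hv'] at huv
          simp at huv
          exact absurd huv.symm (hane v hv')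
        · rw [hv', hupd u hu'] at huv
          simp at huv
          exact absurd huv (hane u hu')
        · rw [hupd u hu', hupd v hv'] at huv
          exact hinj hu' hv' huv)
      (by
        intro v hv
        rcases Finset.mem_insert.1 hv with h | h
        · rw [h]; simpa using haA
        · rw [hupd v h]; exact hA v h)
      (by
        have : T \ insert x S = (T \ S).erase x := by
          ext v; simp only [Finset.mem_sdiff, Finset.mem_insert, Finset.mem_erase]; tauto
        rw [this, Finset.card_erase_of_mem hx, hm]; rfl)
    refine ⟨c', ?_, h2, h3⟩
    intro v hv
    have hvx : v ≠ x := fun h => hv (h ▸ hx)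
    rw [h1 v (by
      intro h
      apply hv
      simp only [Finset.mem_sdiff, Finset.mem_insert] at h ⊢
      tauto)]
    simp [Function.update, hvx]

theorem aux_mem_vertexSet {α : Type} [DecidableEq α] (H : Finset (Finset α)) (v : α) :
    v ∈ vertexSet H ↔ ∃ E ∈ H, v ∈ E := by
  simp [vertexSet, Finset.mem_sup]

theorem aux_vertexSet_insert {α : Type} [DecidableEq α] (H : Finset (Finset α)) (E : Finset α) :
    vertexSet (insert E H) = E ∪ vertexSet H := by
  simp [vertexSet, Finset.sup_insert]

theorem aux_vertexSet_singleton {α : Type} [DecidableEq α] (E : Finset α) :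
    vertexSet {E} = E := by
  simp [vertexSet]

/-- Existence of a good colouring. -/
theorem aux_colour {α : Type} [DecidableEq α] {k : ℕ} (B : Finset (Fin k)) (W : Finset α)
    (H : Finset (Finset α)) (hk : 0 < k) (hH : IsHypertree H) (hc : ∀ E ∈ H, E.card = k)
    (hW : ∀ E ∈ H, (E ∩ W).card ≤ B.card)
    (hI : ∀ E ∈ H, ∀ E' ∈ H, E ≠ E' → E ∩ E' ⊆ W) :
    ∃ c : α → Fin k, ∀ E ∈ H, Set.InjOn c ↑E ∧ ∀ v ∈ E ∩ W, c v ∈ B := by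
  induction hH with
  | single E =>
    obtain ⟨c, -, h2, h3⟩ := aux_extend (fun _ : α => (⟨0, hk⟩ : Fin k)) B ∅ (E ∩ W) (by simp)
      (hW E (by simp)) (by simp) (by simp)
    obtain ⟨c', g1, g2, -⟩ := aux_extend c Finset.univ (E ∩ W) E Finset.inter_subset_left
      (by simp [hc E (by simp)]) h2 (by simp)
    refine ⟨c', ?_⟩
    intro E' hE'
    rw [Finset.mem_singleton] at hE'
    subst hE'
    refine ⟨g2, fun v hv => ?_⟩
    rw [g1 v (by simp only [Finset.mem_sdiff]; tauto)]
    exact h3 v hv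
  | @grow H E P hH hE hP hint ih =>
    obtain ⟨c, hcol⟩ := ih (fun E' h => hc E' (Finset.mem_insert_of_mem h))
      (fun E' h => hW E' (Finset.mem_insert_of_mem h))
      (fun E' h E'' h' => hI E' (Finset.mem_insert_of_mem h) E'' (Finset.mem_insert_of_mem h'))
    have hEP : E ∩ P ⊆ W := hI E (by simp) P (Finset.mem_insert_of_mem hP)
      (fun h => hE (h ▸ hP))
    obtain ⟨c1, f1, f2, f3⟩ := aux_extend c B (E ∩ P) (E ∩ W)
      (fun v hv => Finset.mem_inter.2 ⟨(Finset.mem_inter.1 hv).1, hEP hv⟩)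
      (hW E (by simp))
      ((hcol P hP).1.mono (by intro v hv; exact (Finset.mem_inter.1 (Finset.mem_coe.1 hv)).2))
      (fun v hv => (hcol P hP).2 v (Finset.mem_inter.2 ⟨(Finset.mem_inter.1 hv).2, hEP hv⟩))
    obtain ⟨c2, g1, g2, -⟩ := aux_extend c1 Finset.univ (E ∩ W) E Finset.inter_subset_left
      (by simp [hc E (by simp)]) f2 (by simp)
    have hagree : ∀ v ∈ vertexSet H, c2 v = c v := by
      intro v hv
      have key : v ∈ E → v ∈ P := by
        intro hvE
        have : v ∈ E ∩ P := hint ▸ Finset.mem_inter.2 ⟨hvE, hv⟩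
        exact (Finset.mem_inter.1 this).2
      have key2 : v ∈ E → v ∈ W := fun h => hEP (Finset.mem_inter.2 ⟨h, key h⟩)
      rw [g1 v (by simp only [Finset.mem_sdiff, Finset.mem_inter]; tauto),
        f1 v (by simp only [Finset.mem_sdiff, Finset.mem_inter]; tauto)]
    refine ⟨c2, ?_⟩
    intro E' hE'
    rcases Finset.mem_insert.1 hE' with h | h
    · subst h
      refine ⟨g2, fun v hv => ?_⟩
      rw [g1 v (by simp only [Finset.mem_sdiff]; tauto)]
      exact f3 v hv
    · have hag : ∀ v ∈ E', c2 v = c v := fun v hv =>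
        hagree v ((aux_mem_vertexSet _ _).2 ⟨E', h, hv⟩)
      refine ⟨?_, fun v hv => ?_⟩
      · intro u hu v hv huv
        rw [hag u hu, hag v hv] at huv
        exact (hcol E' h).1 hu hv huv
      · rw [hag v (Finset.mem_inter.1 hv).1]
        exact (hcol E' h).2 v hv

noncomputable def auxGood (F : Finset (Finset ℕ)) (D U : Finset ℕ) : Finset (Finset ℕ) :=
  F.filter fun f => D ⊆ f ∧ f ∩ U ⊆ D

theorem aux_good_count (F : Finset (Finset ℕ)) (D U : Finset ℕ) (s : ℕ) (hs : SStrong s F D) :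
    s * setDeg F D ≤ s * (auxGood F D U).card + (U \ D).card * setDeg F D := by
  have h1 : link F D ⊆ ((auxGood F D U).image fun f => f \ D) ∪
      (U \ D).biUnion (fun v => (link F D).filter fun e => v ∈ e) := by
    intro e he
    have he' := he
    simp only [link, Finset.mem_image, Finset.mem_filter] at he'
    obtain ⟨f, ⟨hf, hDf⟩, rfl⟩ := he'
    rw [Finset.mem_union]
    by_cases hg : f ∩ U ⊆ D
    · left
      exact Finset.mem_image.2 ⟨f, Finset.mem_filter.2 ⟨hf, hDf, hg⟩, rfl⟩
    · right
      obtain ⟨v, hv, hvD⟩ := Finset.not_subset.1 hg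
      have := Finset.mem_inter.1 hv
      exact Finset.mem_biUnion.2 ⟨v, Finset.mem_sdiff.2 ⟨this.2, hvD⟩,
        Finset.mem_filter.2 ⟨he, Finset.mem_sdiff.2 ⟨this.1, hvD⟩⟩⟩
  have h2 : (link F D).card ≤ (auxGood F D U).card + ∑ v ∈ U \ D, vdeg (link F D) v := by
    refine (Finset.card_le_card h1).trans ((Finset.card_union_le _ _).trans ?_)
    refine add_le_add Finset.card_image_le (Finset.card_biUnion_le.trans ?_)
    apply le_of_eq
    apply Finset.sum_congr rfl
    intro v _
    unfold vdeg
    congr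
  have h3 : s * ∑ v ∈ U \ D, vdeg (link F D) v ≤ (U \ D).card * (link F D).card := by
    rw [Finset.mul_sum]
    refine (Finset.sum_le_card_nsmul _ _ (link F D).card (fun v _ => (hs.2 v).le)).trans ?_
    simp
  unfold setDeg
  calc s * (link F D).card ≤ s * ((auxGood F D U).card + ∑ v ∈ U \ D, vdeg (link F D) v) :=
        Nat.mul_le_mul_left _ h2
    _ ≤ _ := by rw [mul_add]; omega

/-- What each list of edges encodes. -/
def auxEnc {α : Type} [DecidableEq α] {k : ℕ} (H : Finset (Finset α)) (F : Finset (Finset ℕ))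
    (X : Fin k → Finset ℕ) (c : α → Fin k) (l : List (Finset ℕ)) (φ : α → ℕ) : Prop :=
  Set.InjOn φ ↑(vertexSet H) ∧ (∀ E ∈ H, E.image φ ∈ F) ∧
    l.toFinset = H.image (fun E => E.image φ) ∧ l.Nodup ∧ ∀ v ∈ vertexSet H, φ v ∈ X (c v)

theorem aux_injOn_of_colour {α : Type} {k : ℕ} (F : Finset (Finset ℕ))
    (X : Fin k → Finset ℕ) (hpart : IsKPartition k F X) (c : α → Fin k) (φ : α → ℕ)
    (E : Finset α) (hc : Set.InjOn c ↑E) (hφ : ∀ v ∈ E, φ v ∈ X (c v)) : Set.InjOn φ ↑E := by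
  intro u hu v hv huv
  apply hc hu hv
  by_contra hne
  have := hpart.1 _ _ hne
  exact Finset.disjoint_left.1 this (hφ u hu) (huv ▸ hφ v hv)

theorem aux_step {α : Type} [DecidableEq α] {k n : ℕ} (H : Finset (Finset α))
    (F : Finset (Finset ℕ)) (X : Fin k → Finset ℕ) (hF : IsKGraphOn k n F)
    (hpart : IsKPartition k F X) (c : α → Fin k) (l : List (Finset ℕ)) (φ : α → ℕ)
    (henc : auxEnc H F X c l φ) (E P : Finset α) (hE : E ∉ H) (hP : P ∈ H)
    (hint : E ∩ vertexSet H = E ∩ P) (hcE : Set.InjOn c ↑E) (hEk : E.card = k)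
    (hPk : P.card = k) (f : Finset ℕ)
    (hf : f ∈ auxGood F ((E ∩ P).image φ) ((vertexSet H).image φ)) :
    ∃ φ', auxEnc (insert E H) F X c (f :: l) φ' := by
  obtain ⟨hinj, himg, hl, hnd, hcol⟩ := henc
  obtain ⟨hfF, hDf, hfU⟩ := Finset.mem_filter.1 hf
  have hex : ∀ i, ∃ x, x ∈ f ∩ X i := fun i => by
    have := hpart.2 f hfF i
    exact Finset.card_pos.1 (by omega)
  choose g hg using hex
  let φ' : α → ℕ := fun v => if v ∈ vertexSet H then φ v else g (c v)
  have hold : ∀ v ∈ vertexSet H, φ' v = φ v := fun v hv => by simp [φ', hv]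
  have hnew : ∀ v, v ∉ vertexSet H → φ' v = g (c v) := fun v hv => by simp [φ', hv]
  have hcol' : ∀ v, v ∈ E ∪ vertexSet H → φ' v ∈ X (c v) := by
    intro v _
    by_cases h : v ∈ vertexSet H
    · rw [hold v h]; exact hcol v h
    · rw [hnew v h]; exact (Finset.mem_inter.1 (hg (c v))).2
  have hinjE : Set.InjOn φ' ↑E := aux_injOn_of_colour F X hpart c φ' E hcE
    (fun v hv => hcol' v (Finset.mem_union_left _ hv))
  have hEf : E.image φ' = f := by
    apply Finset.eq_of_subset_of_card_le
    · intro x hx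
      obtain ⟨v, hv, rfl⟩ := Finset.mem_image.1 hx
      by_cases h : v ∈ vertexSet H
      · rw [hold v h]
        exact hDf (Finset.mem_image_of_mem _ (hint ▸ Finset.mem_inter.2 ⟨hv, h⟩))
      · rw [hnew v h]; exact (Finset.mem_inter.1 (hg (c v))).1
    · rw [Finset.card_image_of_injOn hinjE, hEk, (hF f hfF).2]
  have hcross : ∀ v ∈ E, v ∉ vertexSet H → ∀ w ∈ vertexSet H, φ' v ≠ φ w := by
    intro v hv hvH w hw heq
    have h1 : φ' v ∈ f ∩ (vertexSet H).image φ :=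
      Finset.mem_inter.2 ⟨hEf ▸ Finset.mem_image_of_mem _ hv,
        heq ▸ Finset.mem_image_of_mem _ hw⟩
    obtain ⟨u, hu, hu2⟩ := Finset.mem_image.1 (hfU h1)
    rw [← hint] at hu
    have hu' := Finset.mem_inter.1 hu
    rw [← hold u hu'.2] at hu2
    exact hvH (hinjE hu'.1 hv hu2 ▸ hu'.2)
  have himgold : ∀ E' ∈ H, E'.image φ' = E'.image φ := fun E' hE' =>
    Finset.image_congr (fun v hv => hold v ((aux_mem_vertexSet _ _).2 ⟨E', hE', hv⟩))
  refine ⟨φ', ?_, ?_, ?_, ?_, ?_⟩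
  · rw [aux_vertexSet_insert]
    intro u hu v hv huv
    have hu := Finset.mem_union.1 (Finset.mem_coe.1 hu)
    have hv := Finset.mem_union.1 (Finset.mem_coe.1 hv)
    by_cases h1 : u ∈ vertexSet H <;> by_cases h2 : v ∈ vertexSet H
    · rw [hold u h1, hold v h2] at huv
      exact hinj h1 h2 huv
    · rw [hold u h1] at huv
      exact absurd huv.symm (hcross v (hv.resolve_right h2) h2 u h1)
    · rw [hold v h2] at huv
      exact absurd huv (hcross u (hu.resolve_right h1) h1 v h2)
    · exact hinjE (hu.resolve_right h1) (hv.resolve_right h2) huv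
  · intro E' hE'
    rcases Finset.mem_insert.1 hE' with h | h
    · rw [h, hEf]; exact hfF
    · rw [himgold E' h]; exact himg E' h
  · rw [List.toFinset_cons, hl, Finset.image_insert, hEf]
    congr 1
    exact Finset.image_congr (fun E' hE' => (himgold E' hE').symm)
  · rw [List.nodup_cons]
    refine ⟨fun hfl => ?_, hnd⟩
    have hfl' : f ∈ l.toFinset := List.mem_toFinset.2 hfl
    rw [hl] at hfl'
    obtain ⟨Q, hQ, hQf⟩ := Finset.mem_image.1 hfl'
    have hnot : ¬ E ⊆ vertexSet H := by
      intro h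
      have h1 : E ⊆ P := by
        intro v hv
        have : v ∈ E ∩ P := hint ▸ Finset.mem_inter.2 ⟨hv, h hv⟩
        exact (Finset.mem_inter.1 this).2
      have := Finset.eq_of_subset_of_card_le h1 (by omega)
      exact hE (this ▸ hP)
    obtain ⟨v, hv, hvH⟩ := Finset.not_subset.1 hnot
    have hvf : φ' v ∈ f := hEf ▸ Finset.mem_image_of_mem _ hv
    rw [← hQf] at hvf
    obtain ⟨w, hw, hw2⟩ := Finset.mem_image.1 hvf
    exact hcross v hv hvH w ((aux_mem_vertexSet _ _).2 ⟨Q, hQ, hw⟩) hw2.symm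
  · rw [aux_vertexSet_insert]
    exact hcol'

theorem aux_base {α : Type} [DecidableEq α] {k n : ℕ}
    (F : Finset (Finset ℕ)) (X : Fin k → Finset ℕ) (hF : IsKGraphOn k n F)
    (hpart : IsKPartition k F X) (c : α → Fin k) (E : Finset α)
    (hcE : Set.InjOn c ↑E) (hEk : E.card = k) (f : Finset ℕ) (hfF : f ∈ F) :
    ∃ φ', auxEnc {E} F X c [f] φ' := by
  have hex : ∀ i, ∃ x, x ∈ f ∩ X i := fun i => by
    have := hpart.2 f hfF i
    exact Finset.card_pos.1 (by omega)
  choose g hg using hex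
  have hinjE : Set.InjOn (fun v => g (c v)) ↑E := aux_injOn_of_colour F X hpart c _ E hcE
    (fun v _ => (Finset.mem_inter.1 (hg (c v))).2)
  have hEf : E.image (fun v => g (c v)) = f := by
    apply Finset.eq_of_subset_of_card_le
    · intro x hx
      obtain ⟨v, hv, rfl⟩ := Finset.mem_image.1 hx
      exact (Finset.mem_inter.1 (hg (c v))).1
    · rw [Finset.card_image_of_injOn hinjE, hEk, (hF f hfF).2]
  refine ⟨fun v => g (c v), ?_, ?_, ?_, ?_, ?_⟩
  · rw [aux_vertexSet_singleton]; exact hinjE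
  · intro E' hE'
    rw [Finset.mem_singleton.1 hE', hEf]; exact hfF
  · simp [hEf]
  · simp
  · intro v _
    exact (Finset.mem_inter.1 (hg (c v))).2

theorem aux_proj {α : Type} [DecidableEq α] {k : ℕ}
    (F : Finset (Finset ℕ)) (X : Fin k → Finset ℕ) (hpart : IsKPartition k F X)
    (c : α → Fin k) (φ : α → ℕ) (E P : Finset α) (hcP : Set.InjOn c ↑P)
    (hφ : ∀ v ∈ P, φ v ∈ X (c v)) :
    projJ X ((E ∩ P).image c) (P.image φ) = (E ∩ P).image φ := by
  ext x
  simp only [projJ, Finset.mem_inter, Finset.mem_image, Finset.mem_sup]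
  constructor
  · rintro ⟨⟨u, hu, rfl⟩, j, ⟨w, ⟨hwE, hwP⟩, rfl⟩, hx⟩
    have : c u = c w := by
      by_contra hne
      exact Finset.disjoint_left.1 (hpart.1 _ _ hne) (hφ u hu) hx
    have huw := hcP hu hwP this
    exact ⟨u, ⟨huw ▸ hwE, hu⟩, rfl⟩
  · rintro ⟨u, ⟨huE, huP⟩, rfl⟩
    exact ⟨⟨u, huP, rfl⟩, c u, ⟨u, ⟨huE, huP⟩, rfl⟩, hφ u huP⟩

theorem aux_count {α : Type} [DecidableEq α] {k n s : ℕ} (hk : 0 < k) (hn : 0 < n)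
    (ε : ℝ) (hε : 0 < ε)
    (F : Finset (Finset ℕ)) (X : Fin k → Finset ℕ) (hF : IsKGraphOn k n F)
    (hpart : IsKPartition k F X) (hsh : SuperHomogeneous n k s F X)
    (hsize : ε * (n : ℝ) ^ (k - 1) ≤ (F.card : ℝ))
    (B : Finset (Fin k)) (hB : ∀ S ⊆ B, S ∈ MI F X) (W : Finset α) (c : α → Fin k)
    (H : Finset (Finset α)) (hH : IsHypertree H) (hc : ∀ E ∈ H, E.card = k)
    (hI : ∀ E ∈ H, ∀ E' ∈ H, E ≠ E' → E ∩ E' ⊆ W)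
    (hcol : ∀ E ∈ H, Set.InjOn c ↑E ∧ ∀ v ∈ E ∩ W, c v ∈ B) :
    ∀ r, (vertexSet H).card + r ≤ s → ∃ q, (vertexSet H).card = H.card + q ∧
      ∃ L : Finset (List (Finset ℕ)), (∀ l ∈ L, ∃ φ, auxEnc H F X c l φ) ∧
        (ε / (2 * (k : ℝ) * (s : ℝ))) ^ H.card * (n : ℝ) ^ q * ((r + H.card).factorial : ℝ) ≤
          (L.card : ℝ) * (r.factorial : ℝ) := by
  have hk' : (0 : ℝ) < k := by exact_mod_cast hk
  have hn' : (0 : ℝ) < n := by exact_mod_cast hn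
  induction hH with
  | single E =>
    intro r hr
    have hEk := hc E (by simp)
    rw [aux_vertexSet_singleton, hEk] at hr ⊢
    refine ⟨k - 1, by simp; omega, F.image (fun f => [f]), ?_, ?_⟩
    · intro l hl
      obtain ⟨f, hf, rfl⟩ := Finset.mem_image.1 hl
      exact aux_base F X hF hpart c E (hcol E (by simp)).1 hEk f hf
    · rw [Finset.card_image_of_injective _ (fun a b h => by simpa using h)]
      rw [Finset.card_singleton, pow_one, Nat.factorial_succ]
      push_cast
      have hs : (0 : ℝ) < s := by
        have : 0 < s := by omega
        exact_mod_cast this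
      have hrs : (r : ℝ) + 1 ≤ 2 * k * s := by
        have h1 : r + 1 ≤ s := by omega
        have h2 : r + 1 ≤ 2 * k * s := by nlinarith
        exact_mod_cast h2
      have h3 : ε / (2 * (k : ℝ) * (s : ℝ)) * (r + 1) ≤ ε := by
        rw [div_mul_eq_mul_div, div_le_iff₀ (by positivity)]
        exact mul_le_mul_of_nonneg_left hrs hε.le
      calc ε / (2 * (k : ℝ) * (s : ℝ)) * (n : ℝ) ^ (k - 1) * ((r + 1) * (r.factorial : ℝ))
          = (ε / (2 * (k : ℝ) * (s : ℝ)) * (r + 1)) * (n : ℝ) ^ (k - 1) * (r.factorial : ℝ) := by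
            ring
        _ ≤ ε * (n : ℝ) ^ (k - 1) * (r.factorial : ℝ) := by gcongr
        _ ≤ _ := by gcongr
  | @grow H E P hH hE hP hint ih =>
    intro r hr
    have hEk := hc E (by simp)
    have hPk := hc P (Finset.mem_insert_of_mem hP)
    have hEP : E ∩ P ⊆ W := hI E (by simp) P (Finset.mem_insert_of_mem hP)
      (fun h => hE (h ▸ hP))
    have hjk : (E ∩ P).card < k := by
      by_contra hge
      have h1 : E ∩ P = E := Finset.eq_of_subset_of_card_le Finset.inter_subset_left (by omega)
      have h2 : E ∩ P = P := Finset.eq_of_subset_of_card_le Finset.inter_subset_right (by omega)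
      exact hE (by rw [← h1, h2]; exact hP)
    have hvc : (vertexSet (insert E H)).card + (E ∩ P).card = k + (vertexSet H).card := by
      rw [aux_vertexSet_insert, ← hint, Finset.card_union_add_card_inter, hEk]
    obtain ⟨q, hq, L, hL, hbound⟩ := ih (fun E' h => hc E' (Finset.mem_insert_of_mem h))
      (fun E' h E'' h' => hI E' (Finset.mem_insert_of_mem h) E'' (Finset.mem_insert_of_mem h'))
      (fun E' h => hcol E' (Finset.mem_insert_of_mem h)) (r + 1) (by omega)
    have hs0 : 0 < s := by omega
    have hs : (0 : ℝ) < s := by exact_mod_cast hs0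
    have hcard : (insert E H).card = H.card + 1 := Finset.card_insert_of_notMem hE
    refine ⟨q + (k - 1 - (E ∩ P).card), by omega, ?_⟩
    choose! Φ hΦ using hL
    let G : List (Finset ℕ) → Finset (Finset ℕ) := fun l =>
      auxGood F ((E ∩ P).image (Φ l)) ((vertexSet H).image (Φ l))
    let C : ℝ := ε / (2 * (k : ℝ) * (s : ℝ))
    have hCpos : 0 < C := by positivity
    have hG : ∀ l ∈ L, ((r : ℝ) + 1) * (C * (n : ℝ) ^ (k - 1 - (E ∩ P).card)) ≤ (G l).card := by
      intro l hl
      obtain ⟨hinj, himg, -, -, hcl⟩ := hΦ l hl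
      have hJ : (E ∩ P).image c ∈ MI F X := by
        apply hB
        intro j hj
        obtain ⟨v, hv, rfl⟩ := Finset.mem_image.1 hj
        exact (hcol P (Finset.mem_insert_of_mem hP)).2 v
          (Finset.mem_inter.2 ⟨(Finset.mem_inter.1 hv).2, hEP hv⟩)
      have hPv : ∀ v ∈ P, v ∈ vertexSet H := fun v hv => (aux_mem_vertexSet _ _).2 ⟨P, hP, hv⟩
      have hcP := (hcol P (Finset.mem_insert_of_mem hP)).1
      have hJc : ((E ∩ P).image c).card = (E ∩ P).card :=
        Finset.card_image_of_injOn (hcP.mono (by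
          intro v hv; exact (Finset.mem_inter.1 (Finset.mem_coe.1 hv)).2))
      obtain ⟨hst, -, hdeg⟩ := hsh _ hJ _ (himg P hP)
      rw [aux_proj F X hpart c (Φ l) E P hcP (fun v hv => hcl v (hPv v hv))] at hst hdeg
      rw [hJc] at hdeg
      have hcount := aux_good_count F _ ((vertexSet H).image (Φ l)) s hst
      have hm : ((vertexSet H).image (Φ l) \ (E ∩ P).image (Φ l)).card + (r + 1) ≤ s := by
        rw [Finset.card_sdiff_of_subset (Finset.image_subset_image (fun v hv =>
          hPv v (Finset.mem_inter.1 hv).2)), Finset.card_image_of_injOn hinj,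
          Finset.card_image_of_injOn (hinj.mono (by
            intro v hv; exact hPv v (Finset.mem_inter.1 (Finset.mem_coe.1 hv)).2))]
        omega
      have hnat : (r + 1) * setDeg F ((E ∩ P).image (Φ l)) ≤ s * (G l).card := by
        have := Nat.mul_le_mul_right (setDeg F ((E ∩ P).image (Φ l))) hm
        simp only [G]
        rw [add_mul] at this
        omega
      have hreal : ((r : ℝ) + 1) * (setDeg F ((E ∩ P).image (Φ l)) : ℝ) ≤ s * (G l).card := by
        exact_mod_cast hnat
      have hd : ε / (2 * k) * (n : ℝ) ^ (k - 1 - (E ∩ P).card) ≤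
          (setDeg F ((E ∩ P).image (Φ l)) : ℝ) := by
        refine le_trans ?_ hdeg
        rw [le_div_iff₀ (by positivity)]
        refine le_trans (le_of_eq ?_) hsize
        have : (n : ℝ) ^ (k - 1) = (n : ℝ) ^ (k - 1 - (E ∩ P).card) * (n : ℝ) ^ (E ∩ P).card := by
          rw [← pow_add]; congr 1; omega
        rw [this]
        field_simp
      have hCs : C * s = ε / (2 * k) := by
        simp only [C]; field_simp
      have : s * (((r : ℝ) + 1) * (C * (n : ℝ) ^ (k - 1 - (E ∩ P).card))) ≤ s * (G l).card := by
        refine le_trans (le_of_eq ?_) ((mul_le_mul_of_nonneg_left hd (by positivity)).trans hreal)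
        rw [← hCs]; ring
      exact le_of_mul_le_mul_left this hs
    refine ⟨(L.sigma G).image (fun p => p.2 :: p.1), ?_, ?_⟩
    · intro l' hl'
      obtain ⟨⟨l, f⟩, hp, rfl⟩ := Finset.mem_image.1 hl'
      obtain ⟨hl, hf⟩ := Finset.mem_sigma.1 hp
      exact aux_step H F X hF hpart c l (Φ l) (hΦ l hl) E P hE hP hint
        (hcol E (by simp)).1 hEk hPk f hf
    · rw [Finset.card_image_of_injective _ (by
        rintro ⟨a, b⟩ ⟨a', b'⟩ h
        simp only [List.cons.injEq] at h
        obtain ⟨rfl, rfl⟩ := h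
        rfl), Finset.card_sigma, hcard]
      push_cast
      have hsum : (L.card : ℝ) * (((r : ℝ) + 1) * (C * (n : ℝ) ^ (k - 1 - (E ∩ P).card))) ≤
          ∑ l ∈ L, ((G l).card : ℝ) := by
        rw [← nsmul_eq_mul]
        exact Finset.card_nsmul_le_sum _ _ _ hG
      have hfac : r + 1 + H.card = r + (H.card + 1) := by omega
      rw [hfac] at hbound
      rw [Nat.factorial_succ r] at hbound
      push_cast at hbound
      calc C ^ (H.card + 1) * (n : ℝ) ^ (q + (k - 1 - (E ∩ P).card)) *
              ((r + (H.card + 1)).factorial : ℝ)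
          = (C ^ H.card * (n : ℝ) ^ q * ((r + (H.card + 1)).factorial : ℝ)) *
              (C * (n : ℝ) ^ (k - 1 - (E ∩ P).card)) := by
            rw [pow_succ, pow_add]; ring
        _ ≤ ((L.card : ℝ) * ((r + 1) * (r.factorial : ℝ))) *
              (C * (n : ℝ) ^ (k - 1 - (E ∩ P).card)) := by gcongr
        _ = ((L.card : ℝ) * (((r : ℝ) + 1) * (C * (n : ℝ) ^ (k - 1 - (E ∩ P).card)))) *
              (r.factorial : ℝ) := by ring
        _ ≤ _ := by gcongr

theorem aux_fiber (L : Finset (List (Finset ℕ))) (K : Finset (Finset ℕ)) (t : ℕ)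
    (hK : K.card = t) (hL : ∀ l ∈ L, l.Nodup) :
    (L.filter fun l => l.toFinset = K).card ≤ t.factorial := by
  have hsub : (L.filter fun l => l.toFinset = K) ⊆ K.toList.permutations.toFinset := by
    intro l hl
    obtain ⟨hl1, hl2⟩ := Finset.mem_filter.1 hl
    rw [List.mem_toFinset, List.mem_permutations]
    rw [List.perm_ext_iff_of_nodup (hL l hl1) K.nodup_toList]
    intro a
    rw [Finset.mem_toList, ← hl2, List.mem_toFinset]
  refine (Finset.card_le_card hsub).trans ((List.toFinset_card_le _).trans ?_)
  rw [List.length_permutations, Finset.length_toList, hK]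

/-- an `s`-super-homogeneous `k`-partite `k`-graph of type 1 with at least
`ε·n^{k−1}` edges contains at least `(ε/(2ks))^t·n^{s−t}` copies of any 2-contractible
`k`-tree with `s` vertices and `t` edges. -/
theorem stmt_11 {α : Type} [DecidableEq α] (k s t : ℕ) (hk : 4 ≤ k) (ε : ℝ) (hε : 0 < ε)
    (H : Finset (Finset α)) (hH : IsKTree k H) (h2 : TwoContractible H)
    (hvs : (vertexSet H).card = s) (hte : H.card = t)
    (n : ℕ) (F : Finset (Finset ℕ)) (X : Fin k → Finset ℕ)
    (hF : IsKGraphOn k n F) (hpart : IsKPartition k F X)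
    (hsh : SuperHomogeneous n k s F X)
    (hsize : ε * (n : ℝ) ^ (k - 1) ≤ (F.card : ℝ))
    (htype : TypeOne k (MI F X)) :
    (ε / (2 * (k : ℝ) * (s : ℝ))) ^ t * (n : ℝ) ^ (s - t) ≤ ((copies H F).card : ℝ) := by
  have hk0 : 0 < k := by omega
  obtain ⟨B, hBc, hB⟩ := htype
  have hn : 0 < n := by
    have h0 := hB ∅ (by simp)
    simp only [MI, Finset.mem_image, Finset.mem_filter, Finset.mem_product] at h0
    obtain ⟨p, ⟨⟨hp, -⟩, -⟩, -⟩ := h0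
    obtain ⟨h1, h2⟩ := hF p.1 hp
    have h3 := Finset.card_le_card h1
    simp [vtx] at h3
    omega
  let W : Finset α := (vertexSet H).filter fun v => vdeg H v ≠ 1
  have hW : ∀ E ∈ H, (E ∩ W).card ≤ B.card := by
    intro E hE
    have h1 := h2 E hE
    have h3 : Disjoint (E ∩ W) (E.filter fun v => vdeg H v = 1) := by
      rw [Finset.disjoint_left]
      intro v hv hv'
      exact (Finset.mem_filter.1 (Finset.mem_inter.1 hv).2).2 (Finset.mem_filter.1 hv').2
    have h4 : (E ∩ W) ∪ (E.filter fun v => vdeg H v = 1) ⊆ E :=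
      Finset.union_subset Finset.inter_subset_left (Finset.filter_subset _ _)
    have h5 := Finset.card_le_card h4
    rw [Finset.card_union_of_disjoint h3, hH.2 E hE] at h5
    omega
  have hI : ∀ E ∈ H, ∀ E' ∈ H, E ≠ E' → E ∩ E' ⊆ W := by
    intro E hE E' hE' hne v hv
    obtain ⟨hvE, hvE'⟩ := Finset.mem_inter.1 hv
    refine Finset.mem_filter.2 ⟨(aux_mem_vertexSet _ _).2 ⟨E, hE, hvE⟩, ?_⟩
    intro h1
    unfold vdeg at h1
    exact hne (Finset.card_le_one.1 h1.le E (Finset.mem_filter.2 ⟨hE, hvE⟩) E'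
      (Finset.mem_filter.2 ⟨hE', hvE'⟩))
  obtain ⟨c, hcol⟩ := aux_colour B W H hk0 hH.1 hH.2 hW hI
  obtain ⟨q, hq, L, hL, hbound⟩ := aux_count hk0 hn ε hε F X hF hpart hsh hsize B hB W c H
    hH.1 hH.2 hI hcol 0 (by omega)
  have hqs : s - t = q := by omega
  rw [hqs]
  rw [hte] at hbound
  simp only [zero_add, Nat.factorial_zero, Nat.cast_one, mul_one] at hbound
  have hsub : L.image (fun l => l.toFinset) ⊆ copies H F := by
    intro K hK
    obtain ⟨l, hl, rfl⟩ := Finset.mem_image.1 hK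
    obtain ⟨φ, hinj, himg, hlf, -, -⟩ := hL l hl
    refine Finset.mem_filter.2 ⟨?_, φ, hinj, hlf⟩
    rw [Finset.mem_powerset, hlf]
    intro f hf
    obtain ⟨E, hE, rfl⟩ := Finset.mem_image.1 hf
    exact himg E hE
  have hfib : L.card ≤ t.factorial * (L.image (fun l => l.toFinset)).card := by
    apply Finset.card_le_mul_card_image
    intro K hK
    apply aux_fiber
    · obtain ⟨l, hl, rfl⟩ := Finset.mem_image.1 hK
      obtain ⟨φ, hinj, himg, hlf, -, -⟩ := hL l hl
      rw [hlf, Finset.card_image_of_injOn, hte]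
      intro E hE E' hE' heq
      have hv : ∀ E ∈ H, E ⊆ vertexSet H := fun E hE v hv =>
        (aux_mem_vertexSet _ _).2 ⟨E, hE, hv⟩
      have key : ∀ E ∈ H, ∀ E' ∈ H, E.image φ = E'.image φ → E ⊆ E' := by
        intro E hE E' hE' heq v hvE
        have h1 : φ v ∈ E'.image φ := heq ▸ Finset.mem_image_of_mem _ hvE
        obtain ⟨w, hw, hw2⟩ := Finset.mem_image.1 h1
        exact hinj (hv E' hE' hw) (hv E hE hvE) hw2 ▸ hw
      exact Finset.Subset.antisymm (key E hE E' hE' heq) (key E' hE' E hE heq.symm)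
    · intro l hl
      obtain ⟨φ, -, -, -, hnd, -⟩ := hL l hl
      exact hnd
  have hfin : L.card ≤ t.factorial * (copies H F).card :=
    hfib.trans (Nat.mul_le_mul_left _ (Finset.card_le_card hsub))
  have hfin' : (L.card : ℝ) ≤ (t.factorial : ℝ) * ((copies H F).card : ℝ) := by
    exact_mod_cast hfin
  have hpos : (0 : ℝ) < t.factorial := by exact_mod_cast t.factorial_pos
  refine le_of_mul_le_mul_left ?_ hpos
  rw [mul_comm]
  exact hbound.trans hfin'
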